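/- arXiv:2203.04418 — 11 statements merged into one kernel-verified Lean document; each statement's English description precedes it below -/
import Mathlib

section
/- Let X be a nonempty set and R a reflexive binary relation on X. Then M(S,R) is nonempty for every nonempty finite subset S of X if, and only if, R is acyclic. -/
open Classical Finset symmDiff

section PrefDefs

variable {X : Type*}

/-- The asymmetric part `R^>` of a binary relation `R`. -/
def asymPart (R : X → X → Prop) : X → X → Prop := fun x y => R x y ∧ ¬ R y x

/-- `R` is acyclic: there is no cycle of pairwise distinct elements
`z_0 R^> z_1 R^> ⋯ R^> z_k R^> z_0`. -/
def AcyclicRel (R : X → X → Prop) : Prop :=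
  ¬ ∃ (k : ℕ) (z : Fin (k + 1) → X), Function.Injective z ∧
      ∀ i : Fin (k + 1), asymPart R (z i) (z (i + 1))

/-- An acyclic order: a reflexive acyclic binary relation. -/
def AcyclicOrd (R : X → X → Prop) : Prop := Reflexive R ∧ AcyclicRel R

/-- `M(S,R)`: the set of `R`-maximal elements of `S`. -/
noncomputable def MaxSet [DecidableEq X] (S : Finset X) (R : X → X → Prop) : Finset X :=
  S.filter fun x => ∀ y ∈ S, ¬ asymPart R y x

/-- The μ-top-difference semimetric, where the measure μ is given by the
weights `w x = μ {x}`. -/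
noncomputable def Dmu [Fintype X] [DecidableEq X] (w : X → ℝ) (R R' : X → X → Prop) : ℝ :=
  ∑ S : Finset X, ∑ x ∈ symmDiff (MaxSet S R) (MaxSet S R'), w x

/-- The top-difference semimetric `D`. -/
noncomputable def Dtop [Fintype X] [DecidableEq X] (R R' : X → X → Prop) : ℕ :=
  ∑ S : Finset X, (symmDiff (MaxSet S R) (MaxSet S R')).card

/-- `≿ ⊕ (a,b)`: if `b ∼ a` delete `(b,a)`, if `a, b` are `≿`-incomparable add `(a,b)`. -/
def oplusR (R : X → X → Prop) (a b : X) : X → X → Prop :=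
  fun x y => (R x y ∧ ¬(R b a ∧ x = b ∧ y = a)) ∨ (¬ R b a ∧ x = a ∧ y = b)

/-- `≿ ⊖ (a,b)`: delete the pair `(a,b)`. -/
def ominusR (R : X → X → Prop) (a b : X) : X → X → Prop :=
  fun x y => R x y ∧ ¬(x = a ∧ y = b)

/-- `≿ → ≿_0 ↠ ⊵` : `R0` is a one-step perturbation of `R` toward `R'`. -/
def OneStep (R R0 R' : X → X → Prop) : Prop :=
  AcyclicOrd R0 ∧
  ((∃ a b, asymPart R a b ∧ ¬ asymPart R' a b ∧
      (∀ x, asymPart R' x b → asymPart R x b) ∧ R0 = ominusR R a b) ∨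
   (∃ a b, ¬ asymPart R a b ∧ ¬ asymPart R b a ∧ asymPart R' a b ∧ R0 = oplusR R a b))

/-- `Q` is in-between `R` and `R'` : `Q` is an n-step perturbation of `R` toward `R'`
for some positive integer n. -/
def InBetween (R R' Q : X → X → Prop) : Prop :=
  ∃ (n : ℕ) (c : Fin (n + 1) → (X → X → Prop)),
    OneStep R (c 0) R' ∧
    (∀ i : Fin n, OneStep (c i.castSucc) (c i.succ) R') ∧
    c (Fin.last n) = Q

/-- `N(b,≿)`: the number of `x ≠ b` with not `x ≻ b`. -/
noncomputable def Nnum [Fintype X] (R : X → X → Prop) (b : X) : ℕ :=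
  (Finset.univ.filter fun x => x ≠ b ∧ ¬ asymPart R x b).card

/-- `≿_{ab}`: the partial order whose asymmetric part is `(X \ {a,b}) × {a,b}`. -/
def RabRel (a b : X) : X → X → Prop :=
  fun x y => x = y ∨ ((x ≠ a ∧ x ≠ b) ∧ (y = a ∨ y = b))

/-- `≿_{ab}^+`: as `≿_{ab}` but with `a` ranked strictly above `b`. -/
def RabPlusRel (a b : X) : X → X → Prop :=
  fun x y => RabRel a b x y ∨ (x = a ∧ y = b)

/-- `d` is a semimetric on the set of acyclic orders on `X`. -/
def IsSemimetricOn (d : (X → X → Prop) → (X → X → Prop) → ℝ) : Prop :=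
  (∀ R R', AcyclicOrd R → AcyclicOrd R' → 0 ≤ d R R') ∧
  (∀ R, AcyclicOrd R → d R R = 0) ∧
  (∀ R R', AcyclicOrd R → AcyclicOrd R' → d R R' = d R' R) ∧
  (∀ R R' R'', AcyclicOrd R → AcyclicOrd R' → AcyclicOrd R'' →
    d R R'' ≤ d R R' + d R' R'')

/-- Axiom 1. -/
def Axiom1 (d : (X → X → Prop) → (X → X → Prop) → ℝ) : Prop :=
  ∀ R R0 R' : X → X → Prop, AcyclicOrd R → AcyclicOrd R' →
    InBetween R R' R0 → d R R' = d R R0 + d R0 R'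

/-- Axiom 2. -/
def Axiom2 (d : (X → X → Prop) → (X → X → Prop) → ℝ) : Prop :=
  ∀ a b : X, a ≠ b → d (RabRel a b) (RabPlusRel a b) = 1

/-- Axiom 3. -/
def Axiom3 [Fintype X] (d : (X → X → Prop) → (X → X → Prop) → ℝ) : Prop :=
  (∀ (R : X → X → Prop) (a b : X), AcyclicOrd R → a ≠ b →
      ¬ asymPart R a b → ¬ asymPart R b a → AcyclicOrd (oplusR R a b) →
      d R (oplusR R a b) = (2 : ℝ) ^ (Nnum R b - 1) * d (RabRel a b) (RabPlusRel a b)) ∧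
  (∀ (R : X → X → Prop) (a b : X), AcyclicOrd R → asymPart R a b →
      d R (ominusR R a b) = (2 : ℝ) ^ (Nnum R b) * d (RabRel a b) (RabPlusRel a b))

/-- Axiom 4. -/
def Axiom4 (d : (X → X → Prop) → (X → X → Prop) → ℝ) : Prop :=
  ∀ R R' : X → X → Prop, AcyclicOrd R → AcyclicOrd R' →
    (∀ x y, asymPart R x y ↔ asymPart R' x y) → d R R' = 0

end PrefDefs


/-- For a nonempty set `X` and a reflexive relation `R` on `X`,
`M(S,R)` is nonempty for every nonempty finite `S ⊆ X` iff `R` is acyclic. -/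
theorem stmt_0 {X : Type*} [Nonempty X] (R : X → X → Prop) (hrefl : Reflexive R) :
    (∀ S : Finset X, S.Nonempty → ∃ x ∈ S, ∀ y ∈ S, ¬ asymPart R y x) ↔ AcyclicRel R := by
  constructor
  · rintro h ⟨k, z, -, hz⟩
    obtain ⟨x, hx, hmax⟩ := h (Finset.univ.image z) ⟨z 0, by simp⟩
    obtain ⟨i, -, rfl⟩ := Finset.mem_image.1 hx
    have := hz (i - 1)
    rw [sub_add_cancel] at this
    exact hmax _ (by simp) this
  · intro hac S hS
    by_contra hcon
    push Not at hcon
    have hcon' : ∀ x : S, ∃ y : S, asymPart R (y : X) (x : X) := by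
      rintro ⟨x, hx⟩
      obtain ⟨y, hy, h⟩ := hcon x hx
      exact ⟨⟨y, hy⟩, h⟩
    choose f hf using hcon'
    obtain ⟨x0, hx0⟩ := hS
    obtain ⟨p, hp⟩ : ∃ p : S, p ∈ Function.periodicPts f := by
      obtain ⟨m, n, hmn, he⟩ := Finite.exists_ne_map_eq_of_infinite
        (fun n : ℕ => f^[n] (⟨x0, hx0⟩ : S))
      wlog hlt : m < n generalizing m n
      · exact this n m hmn.symm he.symm (by omega)
      refine ⟨f^[m] ⟨x0, hx0⟩, Function.mk_mem_periodicPts (n := n - m) (by omega) ?_⟩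
      show f^[n - m] (f^[m] _) = _
      rw [← Function.iterate_add_apply, Nat.sub_add_cancel hlt.le, he]
    have hpos := Function.minimalPeriod_pos_of_mem_periodicPts hp
    obtain ⟨k, hk⟩ : ∃ k, Function.minimalPeriod f p = k + 1 :=
      ⟨Function.minimalPeriod f p - 1, by omega⟩
    have hper : f^[k + 1] p = p := hk ▸ Function.iterate_minimalPeriod
    refine hac ⟨k, fun i => (f^[k - i.val] p : S), ?_, ?_⟩
    · intro i j hij
      have h1 : f^[k - i.val] p = f^[k - j.val] p := Subtype.ext hij
      have h2 := (Function.iterate_eq_iterate_iff_of_lt_minimalPeriod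
        (by omega) (by omega)).1 h1
      apply Fin.ext
      omega
    · intro i
      by_cases hi : i = Fin.last k
      · subst hi
        have h := hf (f^[k] p)
        rw [← Function.iterate_succ_apply' f, hper] at h
        simpa using h
      · have hv : (i + 1).val = i.val + 1 := Fin.val_add_one_of_lt (Fin.lt_last_iff_ne_last.2 hi)
        have hlt : i.val < k := Fin.lt_last_iff_ne_last.2 hi
        have h := hf (f^[k - (i.val + 1)] p)
        rw [← Function.iterate_succ_apply' f,
          show (k - (i.val + 1)).succ = k - i.val by omega] at h
        simpa only [hv] using h
end

section
/- Let X be a nonempty finite set and let ≿ and ⊵ be distinct acyclic orders on X with the same symmetric parts. Then ≿ can be transformed into ⊵ in finitely many steps: there exist a positive integer n and acyclic orders ≿_0,…,≿_{n−1} on X such that ≿ → ≿_0 ↠ ⊵, ≿_{k−1} → ≿_k ↠ ⊵ for each k = 1,…,n−1, and ≿_{n−1} = ⊵. -/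
open Classical Finset symmDiff

section Helpers

open Relation

variable {X : Type*}

lemma acyclicRel_of_transGen {R : X → X → Prop} (h : ∀ x, ¬ TransGen (asymPart R) x x) :
    AcyclicRel R := by
  rintro ⟨k, z, -, hz⟩
  have key : ∀ m : ℕ, ∀ hm : m < k + 1, ReflTransGen (asymPart R) (z 0) (z ⟨m, hm⟩) := by
    intro m
    induction m with
    | zero => intro hm; exact ReflTransGen.refl
    | succ m ih =>
      intro hm
      have h1 := hz ⟨m, by omega⟩
      have h2 : (⟨m, by omega⟩ : Fin (k + 1)) + 1 = ⟨m + 1, hm⟩ := by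
        ext
        rw [Fin.val_add_one_of_lt' (by simpa using hm)]
      rw [h2] at h1
      exact (ih (by omega)).tail h1
  have h1 := key k (by omega)
  have h2 := hz (Fin.last k)
  rw [Fin.last_add_one] at h2
  exact h _ (TransGen.tail' h1 h2)

lemma walk_of_transGen {P : X → X → Prop} {x y : X} (h : TransGen P x y) :
    ∃ k : ℕ, 0 < k ∧ ∃ z : ℕ → X, z 0 = x ∧ z k = y ∧ ∀ i < k, P (z i) (z (i + 1)) := by
  induction h with
  | single h =>
    rename_i b
    refine ⟨1, by omega, fun i => if i = 0 then x else b, by simp, by simp, ?_⟩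
    intro i hi
    obtain rfl : i = 0 := by omega
    simpa using h
  | tail _ h ih =>
    rename_i b c _
    obtain ⟨k, hk, z, h0, h1, h2⟩ := ih
    refine ⟨k + 1, by omega, fun i => if i ≤ k then z i else c, by simpa using h0, by simp, ?_⟩
    intro i hi
    by_cases hik : i = k
    · subst hik
      simpa [h1] using h
    · have : i < k := by omega
      simpa [this.le, Nat.succ_le_of_lt this] using h2 i this

lemma transGen_of_acyclicRel {R : X → X → Prop} (h : AcyclicRel R) (x : X) :
    ¬ TransGen (asymPart R) x x := by
  intro hx
  have hex : ∃ k : ℕ, 0 < k ∧ ∃ z : ℕ → X, z 0 = z k ∧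
      ∀ i < k, asymPart R (z i) (z (i + 1)) := by
    obtain ⟨k, hk, z, h0, h1, h2⟩ := walk_of_transGen hx
    exact ⟨k, hk, z, h0.trans h1.symm, h2⟩
  obtain ⟨hk, z, hz, hs⟩ := Nat.find_spec hex
  have hmin := fun m => Nat.find_min hex (m := m)
  generalize Nat.find hex = k at hk hz hs hmin
  obtain ⟨n, rfl⟩ : ∃ n, k = n + 1 := ⟨k - 1, by omega⟩
  have hinj : ∀ i j, i < j → j < n + 1 → z i ≠ z j := by
    intro i j hij hj he
    refine hmin (j - i) (by omega) ⟨by omega, fun m => z (i + m), ?_, ?_⟩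
    · simpa [Nat.add_sub_of_le hij.le] using he
    · intro m hm
      exact hs (i + m) (by omega)
  refine h ⟨n, fun i => z i.val, ?_, ?_⟩
  · intro i j hij
    rcases lt_trichotomy i.val j.val with hl | hl | hl
    · exact absurd hij (hinj _ _ hl j.2)
    · exact Fin.ext hl
    · exact absurd hij.symm (hinj _ _ hl i.2)
  · intro i
    by_cases hi : i.val = n
    · have hi' : i = Fin.last n := Fin.ext hi
      have := hs n (by omega)
      rw [← hz] at this
      subst hi'
      simpa using this
    · have hlt : i.val + 1 < n + 1 := by have := i.2; omega
      have := hs i.val i.2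
      simp only
      rwa [Fin.val_add_one_of_lt' hlt]

lemma asymPart_ominus {R : X → X → Prop} {a b : X} (h : asymPart R a b) (x y : X) :
    asymPart (ominusR R a b) x y ↔ asymPart R x y ∧ ¬ (x = a ∧ y = b) := by
  unfold asymPart ominusR at *
  grind

lemma sym_ominus {R : X → X → Prop} {a b : X} (h : asymPart R a b) (x y : X) :
    (ominusR R a b x y ∧ ominusR R a b y x) ↔ (R x y ∧ R y x) := by
  unfold asymPart ominusR at *
  grind

lemma asymPart_oplus {R : X → X → Prop} {a b : X} (hne : a ≠ b) (h : ¬ R a b) (h' : ¬ R b a)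
    (x y : X) :
    asymPart (oplusR R a b) x y ↔ asymPart R x y ∨ (x = a ∧ y = b) := by
  unfold asymPart oplusR at *
  grind

lemma sym_oplus {R : X → X → Prop} {a b : X} (hne : a ≠ b) (h : ¬ R a b) (h' : ¬ R b a)
    (x y : X) :
    (oplusR R a b x y ∧ oplusR R a b y x) ↔ (R x y ∧ R y x) := by
  unfold oplusR at *
  grind

lemma transGen_add {P P0 : X → X → Prop} {a b : X}
    (h0 : ∀ x y, P0 x y ↔ P x y ∨ (x = a ∧ y = b)) {x y : X} (h : TransGen P0 x y) :
    TransGen P x y ∨ (ReflTransGen P x a ∧ ReflTransGen P b y) := by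
  induction h with
  | single h =>
    rcases (h0 _ _).1 h with h | ⟨rfl, rfl⟩
    · exact Or.inl (.single h)
    · exact Or.inr ⟨.refl, .refl⟩
  | tail _ h ih =>
    rcases (h0 _ _).1 h with h | ⟨rfl, rfl⟩
    · rcases ih with ih | ⟨i1, i2⟩
      · exact Or.inl (ih.tail h)
      · exact Or.inr ⟨i1, i2.tail h⟩
    · rcases ih with ih | ⟨i1, i2⟩
      · exact Or.inr ⟨ih.to_reflTransGen, .refl⟩
      · exact Or.inr ⟨i1, .refl⟩

/-- The combinatorial core: some admissible move exists. -/
lemma exists_move [Finite X] {P Q : X → X → Prop} (hP : ∀ x, ¬ TransGen P x x)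
    (hQ : ∀ x, ¬ TransGen Q x x) (hne : ∃ x y, ¬ (P x y ↔ Q x y)) :
    (∃ a b, P a b ∧ ¬ Q a b ∧ ∀ x, Q x b → P x b) ∨
    (∃ a b, ¬ P a b ∧ Q a b ∧ ¬ ReflTransGen P b a) := by
  by_contra! hcon
  obtain ⟨hd, ha⟩ := hcon
  by_cases hbad : ∃ b, ∃ x, Q x b ∧ ¬ P x b
  · have wf : WellFounded (fun x y => TransGen P y x) := by
      haveI : IsTrans X (fun x y => TransGen P y x) := ⟨fun _ _ _ h1 h2 => h2.trans h1⟩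
      haveI : Std.Irrefl (fun x y => TransGen P y x) := ⟨fun x h => hP x h⟩
      exact Finite.wellFounded_of_trans_of_irrefl _
    obtain ⟨b, ⟨x, hx, hx'⟩, hmin⟩ := wf.has_min {b | ∃ x, Q x b ∧ ¬ P x b} hbad
    have hpath := ha x b hx' hx
    have key : ∀ y, ReflTransGen P b y → ReflTransGen Q b y := by
      intro y hy
      induction hy with
      | refl => exact .refl
      | tail h1 h2 ih =>
        rename_i u v
        refine ih.tail ?_
        by_contra hq
        obtain ⟨w, hw, hw'⟩ := hd _ _ h2 hq
        exact hmin v ⟨w, hw, hw'⟩ (TransGen.tail' h1 h2)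
    exact hQ b (TransGen.tail' (key x hpath) hx)
  · push Not at hbad
    obtain ⟨x, y, hxy⟩ := hne
    have hp : P x y ∧ ¬ Q x y := by
      have := hbad y x
      tauto
    obtain ⟨w, hw, hw'⟩ := hd _ _ hp.1 hp.2
    exact hw' (hbad _ _ hw)

/-- Set of disagreements. -/
def disagree (R R' : X → X → Prop) : Set (X × X) :=
  {p | ¬ (asymPart R p.1 p.2 ↔ asymPart R' p.1 p.2)}

lemma exists_step [Finite X] {R R' : X → X → Prop}
    (hR : AcyclicOrd R) (hR' : AcyclicOrd R') (hne : R ≠ R')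
    (hsym : ∀ x y, (R x y ∧ R y x) ↔ (R' x y ∧ R' y x)) :
    ∃ R0, OneStep R R0 R' ∧ (∀ x y, (R0 x y ∧ R0 y x) ↔ (R' x y ∧ R' y x)) ∧
      disagree R0 R' ⊂ disagree R R' := by
  have hP := transGen_of_acyclicRel hR.2
  have hQ := transGen_of_acyclicRel hR'.2
  have hd : ∃ x y, ¬ (asymPart R x y ↔ asymPart R' x y) := by
    by_contra! hc
    apply hne
    funext x y
    have h1 := hc x y
    have h2 := hsym x y
    unfold asymPart at h1
    apply propext
    tauto
  rcases exists_move hP hQ hd with ⟨a, b, hab, hab', hb⟩ | ⟨a, b, hab, hab', hpath⟩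
  · have hs := asymPart_ominus hab
    refine ⟨ominusR R a b, ⟨⟨?_, ?_⟩, Or.inl ⟨a, b, hab, hab', hb, rfl⟩⟩, ?_, ?_⟩
    · intro x
      refine ⟨hR.1 x, ?_⟩
      rintro ⟨rfl, rfl⟩
      exact hab.2 hab.1
    · apply acyclicRel_of_transGen
      intro x hx
      exact hP x (TransGen.mono (fun u v h => ((hs u v).1 h).1) _ _ hx)
    · intro x y
      rw [sym_ominus hab, hsym]
    · rw [Set.ssubset_iff_of_subset]
      · refine ⟨(a, b), ?_, ?_⟩ <;> simp [disagree, hs, hab, hab']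
      · rintro ⟨x, y⟩ h
        simp only [disagree, Set.mem_setOf_eq, hs] at h ⊢
        grind
  · have hba : ¬ asymPart R b a := fun h => hpath (.single h)
    have hn : a ≠ b := by
      rintro rfl
      exact hab'.2 hab'.1
    have h1 := hsym a b
    have hRab : ¬ R a b := by unfold asymPart at *; tauto
    have hRba : ¬ R b a := by unfold asymPart at *; tauto
    have hs := asymPart_oplus hn hRab hRba
    refine ⟨oplusR R a b, ⟨⟨?_, ?_⟩, Or.inr ⟨a, b, hab, hba, hab', rfl⟩⟩, ?_, ?_⟩
    · intro x
      exact Or.inl ⟨hR.1 x, fun h => hRba h.1⟩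
    · apply acyclicRel_of_transGen
      intro x hx
      rcases transGen_add hs hx with h | ⟨h2, h3⟩
      · exact hP x h
      · exact hpath (h3.trans h2)
    · intro x y
      rw [sym_oplus hn hRab hRba, hsym]
    · rw [Set.ssubset_iff_of_subset]
      · refine ⟨(a, b), ?_, ?_⟩ <;> simp [disagree, hs, hab, hab']
      · rintro ⟨x, y⟩ h
        simp only [disagree, Set.mem_setOf_eq, hs] at h ⊢
        grind

lemma inBetween_cons {R R0 R' Q : X → X → Prop} (h : OneStep R R0 R') (h' : InBetween R0 R' Q) :
    InBetween R R' Q := by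
  obtain ⟨n, c, h0, h1, h2⟩ := h'
  refine ⟨n + 1, Fin.cons R0 c, by simpa using h, ?_, ?_⟩
  · intro i
    refine Fin.cases ?_ (fun j => ?_) i
    · simpa using h0
    · have := h1 j
      rw [Fin.cons_succ, ← Fin.succ_castSucc, Fin.cons_succ]
      exact this
  · rw [← Fin.succ_last, Fin.cons_succ]
    exact h2

end Helpers


/-- Two distinct acyclic orders on a nonempty finite set with the same
symmetric parts can be transformed into one another by finitely many one-step
perturbations. -/
theorem stmt_1 {X : Type*} [Fintype X] [Nonempty X] (R R' : X → X → Prop)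
    (hR : AcyclicOrd R) (hR' : AcyclicOrd R') (hne : R ≠ R')
    (hsym : ∀ x y, (R x y ∧ R y x) ↔ (R' x y ∧ R' y x)) :
    InBetween R R' R' := by
  generalize hm : (disagree R R').ncard = m
  induction m using Nat.strong_induction_on generalizing R with
  | _ m ih =>
    obtain ⟨R0, h1, h2, h3⟩ := exists_step hR hR' hne hsym
    by_cases he : R0 = R'
    · subst he
      exact ⟨0, fun _ => R0, h1, fun i => i.elim0, rfl⟩
    · have hlt := Set.ncard_lt_ncard h3 (Set.toFinite _)
      exact inBetween_cons h1 (ih _ (hm ▸ hlt) R0 h1.1 he h2 rfl)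
end

section
/- Let X be a finite set, let ≿, ≿_0, ⊵ be acyclic orders on X with ≿ → ≿_0 ↠ ⊵ (≿_0 is a one-step perturbation of ≿ toward ⊵), and let S ⊆ X. Then the sets M(S,≿) △ M(S,≿_0) and M(S,≿_0) △ M(S,⊵) are disjoint, and their union equals M(S,≿) △ M(S,⊵). -/
open Classical Finset symmDiff

theorem asym_ominus {X : Type*} (R : X → X → Prop) (a b : X) (hab : asymPart R a b) (x y : X) :
    asymPart (ominusR R a b) x y ↔ asymPart R x y ∧ ¬(x = a ∧ y = b) := by
  unfold asymPart ominusR at *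
  grind

theorem asym_oplus {X : Type*} (R : X → X → Prop) (a b : X) (hne : a ≠ b)
    (hab : ¬ asymPart R a b) (hba : ¬ asymPart R b a) (x y : X) :
    asymPart (oplusR R a b) x y ↔ asymPart R x y ∨ (x = a ∧ y = b) := by
  unfold asymPart oplusR at *
  grind

theorem key_aux {X : Type*} [DecidableEq X] (R R0 R' : X → X → Prop)
    (h : OneStep R R0 R') (S : Finset X) (x : X) :
    (x ∈ MaxSet S R ↔ x ∈ MaxSet S R0) ∨ (x ∈ MaxSet S R0 ↔ x ∈ MaxSet S R') := by
  obtain ⟨-, ⟨a, b, hab, hab', hx, rfl⟩ | ⟨a, b, hab, hba, hab', rfl⟩⟩ := h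
  · simp only [MaxSet, Finset.mem_filter, asym_ominus R a b hab]
    grind
  · have hne : a ≠ b := by
      rintro rfl
      exact hab'.2 hab'.1
    simp only [MaxSet, Finset.mem_filter, asym_oplus R a b hne hab hba]
    grind

/-- If `≿ → ≿_0 ↠ ⊵`, then for every `S ⊆ X` the sets
`M(S,≿) △ M(S,≿_0)` and `M(S,≿_0) △ M(S,⊵)` are disjoint and their union is
`M(S,≿) △ M(S,⊵)`. -/
theorem stmt_2 {X : Type*} [Fintype X] [DecidableEq X]
    (R R0 R' : X → X → Prop) (hR : AcyclicOrd R) (hR' : AcyclicOrd R')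
    (h : OneStep R R0 R') (S : Finset X) :
    Disjoint (symmDiff (MaxSet S R) (MaxSet S R0)) (symmDiff (MaxSet S R0) (MaxSet S R')) ∧
    (symmDiff (MaxSet S R) (MaxSet S R0)) ∪ (symmDiff (MaxSet S R0) (MaxSet S R'))
      = symmDiff (MaxSet S R) (MaxSet S R') := by
  have key : ∀ x, (x ∈ MaxSet S R ↔ x ∈ MaxSet S R0) ∨ (x ∈ MaxSet S R0 ↔ x ∈ MaxSet S R') :=
    key_aux R R0 R' h S
  constructor
  · rw [Finset.disjoint_left]
    intro x hx hx'
    rw [Finset.mem_symmDiff] at hx hx'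
    have := key x
    tauto
  · ext x
    rw [Finset.mem_union, Finset.mem_symmDiff, Finset.mem_symmDiff, Finset.mem_symmDiff]
    have := key x
    tauto
end

section
/- Let X be a finite set, μ a positive measure on 2^X, and ≿ an acyclic order on X with asymmetric part ≻. Then: (i) for distinct a,b ∈ X with neither a ≻ b nor b ≻ a such that ≿ ⊕ (a,b) is a well-defined acyclic order, D^μ(≿, ≿ ⊕ (a,b)) = 2^{N(b,≿)−1} · μ({b}); (ii) for a,b ∈ X with a ≻ b, D^μ(≿, ≿ ⊖ (a,b)) = 2^{N(b,≿)} · μ({b}); and (iii) for distinct a,b ∈ X, D^μ(≿_{ab}, ≿_{ab}^+) = μ({b}). -/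
open Classical Finset symmDiff

theorem key_aux_s4 {X : Type*} [Fintype X] [DecidableEq X] (w : X → ℝ)
    (R R' : X → X → Prop) (a b : X) (hab : a ≠ b) (hn : ¬ asymPart R a b)
    (h : ∀ x y, asymPart R' x y ↔ asymPart R x y ∨ (x = a ∧ y = b)) :
    Dmu w R R' = (2 : ℝ) ^ (Nnum R b - 1) * w b := by
  have hbb : ¬ asymPart R b b := fun hh => hh.2 hh.1
  have h1 : ∀ S : Finset X, ∑ x ∈ symmDiff (MaxSet S R) (MaxSet S R'), w x =
      if S ∈ Finset.Icc ({a, b} : Finset X)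
        (insert b (Finset.univ.filter fun x => x ≠ b ∧ ¬ asymPart R x b))
      then w b else 0 := by
    intro S
    have hm : S ∈ Finset.Icc ({a, b} : Finset X)
        (insert b (Finset.univ.filter fun x => x ≠ b ∧ ¬ asymPart R x b)) ↔
        (a ∈ S ∧ b ∈ S ∧ ∀ y ∈ S, ¬ asymPart R y b) := by
      simp only [Finset.mem_Icc, Finset.subset_iff, Finset.mem_insert,
        Finset.mem_singleton, Finset.mem_filter, Finset.mem_univ, true_and]
      constructor
      · rintro ⟨h1, h2⟩
        refine ⟨h1 (Or.inl rfl), h1 (Or.inr rfl), fun y hy => ?_⟩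
        rcases h2 hy with rfl | h3
        · exact hbb
        · exact h3.2
      · rintro ⟨h1, h2, h3⟩
        refine ⟨?_, fun y hy => ?_⟩
        · rintro x (rfl | rfl) <;> assumption
        · by_cases hyb : y = b
          · exact Or.inl hyb
          · exact Or.inr ⟨hyb, h3 y hy⟩
    have hs : symmDiff (MaxSet S R) (MaxSet S R') =
        if (a ∈ S ∧ b ∈ S ∧ ∀ y ∈ S, ¬ asymPart R y b) then {b} else ∅ := by
      ext x
      split_ifs with hc
      · simp only [Finset.mem_symmDiff, MaxSet, Finset.mem_filter, h, Finset.mem_singleton]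
        grind
      · simp only [Finset.mem_symmDiff, MaxSet, Finset.mem_filter, h, Finset.notMem_empty]
        grind
    rw [hs]
    simp only [hm]
    split_ifs <;> simp
  unfold Dmu
  rw [Finset.sum_congr rfl fun S _ => h1 S, Finset.sum_ite_mem, Finset.univ_inter,
    Finset.sum_const, Finset.card_Icc_finset, Finset.card_insert_of_notMem (by simp),
    Finset.card_pair hab, nsmul_eq_mul]
  · unfold Nnum
    push_cast
    congr!
  · intro x hx
    simp only [Finset.mem_insert, Finset.mem_singleton, Finset.mem_filter, Finset.mem_univ,
      true_and] at hx ⊢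
    rcases hx with rfl | rfl
    · exact Or.inr ⟨hab, hn⟩
    · exact Or.inl rfl

/-- the values of `D^μ` at one-step additions and deletions, and at the
pair `(≿_{ab}, ≿_{ab}^+)`. -/
theorem stmt_4 {X : Type*} [Fintype X] [DecidableEq X]
    (w : X → ℝ) (hw : ∀ x, 0 ≤ w x)
    (R : X → X → Prop) (hR : AcyclicOrd R) :
    (∀ a b : X, a ≠ b → ¬ asymPart R a b → ¬ asymPart R b a →
        AcyclicOrd (oplusR R a b) →
        Dmu w R (oplusR R a b) = (2 : ℝ) ^ (Nnum R b - 1) * w b) ∧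
    (∀ a b : X, asymPart R a b →
        Dmu w R (ominusR R a b) = (2 : ℝ) ^ (Nnum R b) * w b) ∧
    (∀ a b : X, a ≠ b → Dmu w (RabRel a b) (RabPlusRel a b) = w b) := by
  refine ⟨?_, ?_, ?_⟩
  · intro a b hab h1 h2 _
    refine key_aux_s4 w R _ a b hab h1 ?_
    intro x y
    simp only [asymPart, oplusR] at *
    by_cases hba : R b a <;> grind
  · intro a b h
    have hab : a ≠ b := by rintro rfl; exact h.2 h.1
    have hk := key_aux_s4 w (ominusR R a b) R a b hab (by simp [asymPart, ominusR]) (by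
      intro x y
      simp only [asymPart, ominusR] at *
      grind)
    have hN : Nnum (ominusR R a b) b = Nnum R b + 1 := by
      unfold Nnum
      rw [← Finset.card_insert_of_notMem (a := a)]
      · congr 1
        ext x
        simp only [Finset.mem_insert, Finset.mem_filter, Finset.mem_univ, true_and, asymPart,
          ominusR] at *
        grind
      · simp [h]
    rw [hN, Nat.add_sub_cancel] at hk
    rw [← hk]
    unfold Dmu
    simp only [symmDiff_comm]
  · intro a b hab
    rw [key_aux_s4 w (RabRel a b) (RabPlusRel a b) a b hab]
    · have : Nnum (RabRel a b) b = 1 := by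
        unfold Nnum
        rw [Finset.card_eq_one]
        refine ⟨a, ?_⟩
        ext x
        simp only [Finset.mem_singleton, Finset.mem_filter, Finset.mem_univ, true_and, asymPart,
          RabRel]
        grind
      simp [this]
    · simp only [asymPart, RabRel]
      grind
    · intro x y
      simp only [asymPart, RabRel, RabPlusRel]
      grind
end

section
/- Let X be a finite set and let d : A(X) × A(X) → [0,∞) be a semimetric on the set A(X) of acyclic orders on X that satisfies Axioms 1 and 3. Then d(≿_{ab}, ≿_{ab}^+) = d(≿_{cb}, ≿_{cb}^+) for every pairwise distinct a, b, c ∈ X. -/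
open Classical Finset symmDiff

/-- The relation whose asymmetric part is `S × {b}`. -/
def starRel {X : Type*} (b : X) (S : Finset X) : X → X → Prop :=
  fun x y => x = y ∨ (y = b ∧ x ∈ S)

theorem starRel_asym {X : Type*} (b : X) (S : Finset X) (hb : b ∉ S) (x y : X) :
    asymPart (starRel b S) x y ↔ (y = b ∧ x ∈ S) := by
  unfold asymPart starRel
  constructor
  · rintro ⟨h | h, h'⟩
    · exact absurd (Or.inl h.symm) h'
    · exact h
  · rintro ⟨rfl, h⟩
    refine ⟨Or.inr ⟨rfl, h⟩, ?_⟩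
    rintro (h' | ⟨_, h'⟩)
    · exact hb (h' ▸ h)
    · exact hb h'

theorem starRel_acyclic {X : Type*} (b : X) (S : Finset X) (hb : b ∉ S) :
    AcyclicOrd (starRel b S) := by
  refine ⟨fun x => Or.inl rfl, ?_⟩
  rintro ⟨k, z, -, hz⟩
  have h0 := (starRel_asym b S hb _ _).1 (hz 0)
  have h1 := (starRel_asym b S hb _ _).1 (hz (0 + 1))
  exact hb (h0.1 ▸ h1.2)

theorem starRel_oplus {X : Type*} [DecidableEq X] (b : X) (S : Finset X) (a : X)
    (hab : a ≠ b) : oplusR (starRel b S) a b = starRel b (insert a S) := by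
  funext x y
  have hba : ¬ starRel b S b a := by
    rintro (h | h)
    · exact hab h.symm
    · exact hab h.1
  apply propext
  simp only [oplusR, hba, starRel, Finset.mem_insert]
  tauto

theorem starRel_Nnum {X : Type*} [Fintype X] [DecidableEq X] (b : X) (S : Finset X)
    (hb : b ∉ S) : Nnum (starRel b S) b + (S.card + 1) = Fintype.card X := by
  rw [← Finset.card_insert_of_notMem hb, ← Finset.card_compl_add_card (insert b S), Nnum]
  congr 2
  ext x
  simp [starRel_asym b S hb]

theorem starRel_d {X : Type*} [Fintype X] [DecidableEq X]
    (d : (X → X → Prop) → (X → X → Prop) → ℝ) (h3 : Axiom3 d)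
    (b : X) (S : Finset X) (hb : b ∉ S) (a : X) (hab : a ≠ b) (ha : a ∉ S) :
    d (starRel b S) (starRel b (insert a S))
      = (2 : ℝ) ^ (Fintype.card X - (S.card + 2)) * d (RabRel a b) (RabPlusRel a b) := by
  have h := h3.1 (starRel b S) a b (starRel_acyclic b S hb) hab
    (by rw [starRel_asym b S hb]; tauto) (by rw [starRel_asym b S hb]; tauto)
    (by rw [starRel_oplus b S a hab]
        exact starRel_acyclic b _ (by simp [hab.symm, hb]))
  rw [starRel_oplus b S a hab] at h
  rw [h]
  congr 2
  have := starRel_Nnum b S hb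
  omega

theorem starRel_path {X : Type*} [Fintype X] [DecidableEq X]
    (d : (X → X → Prop) → (X → X → Prop) → ℝ) (h1 : Axiom1 d) (h3 : Axiom3 d)
    (a b c : X) (hab : a ≠ b) (hbc : b ≠ c) (hac : a ≠ c) :
    d (starRel b ∅) (starRel b {a, c})
      = (2 : ℝ) ^ (Fintype.card X - 2) * d (RabRel a b) (RabPlusRel a b)
        + (2 : ℝ) ^ (Fintype.card X - 3) * d (RabRel c b) (RabPlusRel c b) := by
  have e : ({a, c} : Finset X) = insert c {a} := Finset.pair_comm a c
  have hb0 : b ∉ (∅ : Finset X) := by simp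
  have hb1 : b ∉ ({a} : Finset X) := by simp [hab.symm]
  have hb2 : b ∉ ({a, c} : Finset X) := by simp [hab.symm, hbc]
  have hI : InBetween (starRel b ∅) (starRel b {a, c}) (starRel b {a}) := by
    refine ⟨0, fun _ => starRel b {a}, ⟨starRel_acyclic b _ hb1, Or.inr ⟨a, b, ?_, ?_, ?_, ?_⟩⟩,
      fun i => i.elim0, rfl⟩
    · simp [starRel_asym b _ hb0]
    · simp [starRel_asym b _ hb0]
    · simp [starRel_asym b _ hb2]
    · rw [starRel_oplus b ∅ a hab]; rfl
  have hA := starRel_d d h3 b ∅ hb0 a hab (by simp)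
  have hC := starRel_d d h3 b {a} hb1 c hbc.symm (by simp [hac.symm])
  rw [h1 _ _ _ (starRel_acyclic b _ hb0) (starRel_acyclic b _ hb2) hI]
  rw [← e] at hC
  rw [hC]
  exact congrArg (· + _) hA

/-- Lemma 3.4: if a semimetric `d` on the acyclic orders satisfies
Axioms 1 and 3 then `d(≿_{ab},≿_{ab}^+) = d(≿_{cb},≿_{cb}^+)` for pairwise
distinct `a,b,c`. -/
theorem stmt_5 {X : Type*} [Fintype X] [DecidableEq X]
    (d : (X → X → Prop) → (X → X → Prop) → ℝ)
    (hd : IsSemimetricOn d) (h1 : Axiom1 d) (h3 : Axiom3 d)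
    (a b c : X) (hab : a ≠ b) (hbc : b ≠ c) (hac : a ≠ c) :
    d (RabRel a b) (RabPlusRel a b) = d (RabRel c b) (RabPlusRel c b) := by
  have hA := starRel_path d h1 h3 a b c hab hbc hac
  have hC := starRel_path d h1 h3 c b a hbc.symm hab.symm hac.symm
  rw [Finset.pair_comm c a, hA] at hC
  have hcard : 3 ≤ Fintype.card X := by
    have h : ({a, b, c} : Finset X).card = 3 := Finset.card_eq_three.2 ⟨a, b, c, hab, hac, hbc, rfl⟩
    rw [← h]
    exact Finset.card_le_univ _
  obtain ⟨m, hm⟩ := Nat.exists_eq_add_of_le hcard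
  have e2 : Fintype.card X - 2 = m + 1 := by omega
  have e3 : Fintype.card X - 3 = m := by omega
  rw [e2, e3, pow_succ] at hC
  have hp : (2 : ℝ) ^ m ≠ 0 := by positivity
  apply mul_left_cancel₀ hp
  linarith
end

section
/- Let X be a finite set and μ a positive measure on 2^X with μ({x}) > 0 for every x ∈ X. Then D^μ restricted to the set of partial orders on X is a metric: for any two distinct partial orders ≿ and ⊵ on X, D^μ(≿,⊵) > 0. -/
open Classical Finset symmDiff

/-- for a measure with strictly positive weights, `D^μ` is a metric on
the set of partial orders: distinct partial orders are at positive distance. -/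
theorem stmt_8 {X : Type*} [Fintype X] [DecidableEq X]
    (w : X → ℝ) (hw : ∀ x, 0 < w x)
    (R R' : X → X → Prop)
    (hR : Reflexive R ∧ Transitive R ∧ AntiSymmetric R)
    (hR' : Reflexive R' ∧ Transitive R' ∧ AntiSymmetric R')
    (hne : R ≠ R') :
    0 < Dmu w R R' := by
  have key : ∀ (Q : X → X → Prop), (Reflexive Q ∧ Transitive Q ∧ AntiSymmetric Q) →
      ∀ a b, Q a b ↔ (a = b ∨ b ∉ MaxSet {a, b} Q) := by
    rintro Q ⟨h1, -, h3⟩ a b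
    have e : b ∉ MaxSet {a, b} Q ↔ asymPart Q a b := by
      unfold MaxSet asymPart
      simp only [Finset.mem_filter, Finset.mem_insert, Finset.mem_singleton]
      grind
    rw [e]
    constructor
    · intro h
      by_cases hab : a = b
      · exact Or.inl hab
      · exact Or.inr ⟨h, fun h' => hab (h3 h h')⟩
    · rintro (rfl | h)
      · exact h1 a
      · exact h.1
  have hex : ∃ S : Finset X, MaxSet S R ≠ MaxSet S R' := by
    by_contra hcon
    push Not at hcon
    apply hne
    funext a b
    rw [eq_iff_iff, key R hR, key R' hR', hcon]
  obtain ⟨S, hS⟩ := hex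
  unfold Dmu
  refine Finset.sum_pos' (fun T _ => Finset.sum_nonneg fun x _ => (hw x).le)
    ⟨S, Finset.mem_univ S, Finset.sum_pos (fun x _ => hw x) ?_⟩
  rw [Finset.nonempty_iff_ne_empty]
  intro h
  exact hS (symmDiff_eq_bot.mp h)
end

section
/- Let X be a finite set and let ≿_1 and ≿_2 be regular preorders on X such that M(S,≿_1) = M(S,≿_2) for every two-element subset S of X. Then ≿_1 = ≿_2. -/
open Classical Finset symmDiff

/-- The indifference part `ind(≿)` of a preorder. -/
def indPart {X : Type*} (R : X → X → Prop) : X → X → Prop :=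
  fun x y => ∀ z, (asymPart R x z ↔ asymPart R y z) ∧ (asymPart R z x ↔ asymPart R z y)

/-- regular preorders that have the same maximal sets on every
two-element menu coincide. -/
theorem stmt_9 {X : Type*} [Fintype X] [DecidableEq X]
    (R1 R2 : X → X → Prop)
    (h1 : Reflexive R1 ∧ Transitive R1) (h2 : Reflexive R2 ∧ Transitive R2)
    (hreg1 : ∀ x y, (R1 x y ∧ R1 y x) ↔ indPart R1 x y)
    (hreg2 : ∀ x y, (R2 x y ∧ R2 y x) ↔ indPart R2 x y)
    (hM : ∀ S : Finset X, S.card = 2 → MaxSet S R1 = MaxSet S R2) :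
    R1 = R2 := by
  have key : ∀ x y, asymPart R1 x y ↔ asymPart R2 x y := by
    intro x y
    by_cases hxy : x = y
    · subst hxy
      simp [asymPart]
    · have h := hM {x, y} (Finset.card_pair hxy)
      have h' : y ∈ MaxSet {x, y} R1 ↔ y ∈ MaxSet {x, y} R2 := by rw [h]
      simp only [MaxSet, Finset.mem_filter, Finset.mem_insert, Finset.mem_singleton] at h'
      have e : ∀ R : X → X → Prop,
          ((y = x ∨ True) ∧ ∀ z, z = x ∨ z = y → ¬ asymPart R z y) ↔ ¬ asymPart R x y := by
        intro R
        constructor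
        · rintro ⟨_, hz⟩
          exact hz x (Or.inl rfl)
        · intro hn
          refine ⟨Or.inr trivial, ?_⟩
          rintro z (rfl | rfl)
          · exact hn
          · exact fun hz => hz.2 hz.1
      rw [e, e] at h'
      exact not_iff_not.mp h'
  have hind : ∀ x y, indPart R1 x y ↔ indPart R2 x y := by
    intro x y
    simp only [indPart, key]
  have hsym : ∀ x y, (R1 x y ∧ R1 y x) ↔ (R2 x y ∧ R2 y x) := by
    intro x y
    rw [hreg1, hreg2, hind]
  funext x y
  have a := key x y
  have b := hsym x y
  simp only [asymPart] at a
  apply propext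
  tauto
end

section
/- Let X be a finite set with |X| = n ≥ 3, let Σ be the set of adjacent transpositions of {1,…,n}, and let μ be a positive measure on 2^X such that μ({x}) ≠ μ({y}) for some x, y ∈ X. Then for every weight function ω : Σ → [0,∞), the weighted Kendall metric d_ω does not coincide with D^μ restricted to the set L(X) of linear orders on X; that is, there exist linear orders ≿, ⊵ on X with d_ω(≿,⊵) ≠ D^μ(≿,⊵). -/
open Classical Finset symmDiff

/-- A linear order: reflexive, transitive, antisymmetric and total. -/
def LinearOrderRel {X : Type*} (R : X → X → Prop) : Prop :=
  Reflexive R ∧ Transitive R ∧ AntiSymmetric R ∧ Total R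

/-- `v` is the rank vector `v(≿) = (x_1,…,x_n)` of the linear order `R`,
listing the elements of `X` in strictly decreasing `R`-rank. -/
def IsRankVec {X : Type*} [Fintype X] (R : X → X → Prop)
    (v : Fin (Fintype.card X) → X) : Prop :=
  Function.Bijective v ∧ ∀ i j : Fin (Fintype.card X), i < j → asymPart R (v i) (v j)

/-- An adjacent transposition of `{1,…,n}`. -/
def AdjTrans {n : ℕ} (σ : Equiv.Perm (Fin n)) : Prop :=
  ∃ (k : ℕ) (h : k + 1 < n), σ = Equiv.swap ⟨k, Nat.lt_of_succ_lt h⟩ ⟨k + 1, h⟩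

/-- The linear order with rank vector `e`. -/
def ordOf {X : Type*} {n : ℕ} (e : Fin n ≃ X) : X → X → Prop :=
  fun x y => e.symm x ≤ e.symm y

lemma ordOf_linear {X : Type*} {n : ℕ} (e : Fin n ≃ X) : LinearOrderRel (ordOf e) := by
  refine ⟨fun x => le_refl _, fun x y z h1 h2 => le_trans h1 h2, fun x y h1 h2 => ?_,
    fun x y => le_total _ _⟩
  exact e.symm.injective (le_antisymm h1 h2)

lemma asym_ordOf {X : Type*} {n : ℕ} (e : Fin n ≃ X) (x y : X) :
    asymPart (ordOf e) x y ↔ e.symm x < e.symm y := by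
  unfold asymPart ordOf
  constructor
  · rintro ⟨_, h⟩
    exact not_le.mp h
  · intro h
    exact ⟨h.le, not_le.mpr h⟩

lemma rankVec_unique {X : Type*} [Fintype X] (e : Fin (Fintype.card X) ≃ X)
    (v : Fin (Fintype.card X) → X) (h : IsRankVec (ordOf e) v) : v = e := by
  have h1 : StrictMono (fun i => e.symm (v i)) := fun i j hij =>
    (asym_ordOf e _ _).1 (h.2 i j hij)
  have h2 : (fun i => e.symm (v i)) = id := by
    apply (StrictMono.range_inj h1 strictMono_id).1
    rw [Set.range_id]
    exact (e.symm.surjective.comp h.1.2).range_eq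
  funext i
  have := congrFun h2 i
  exact (Equiv.symm_apply_eq e).1 this

lemma mem_maxSet_ordOf {X : Type*} [DecidableEq X] {n : ℕ} (e : Fin n ≃ X) (S : Finset X)
    (x : X) : x ∈ MaxSet S (ordOf e) ↔ x ∈ S ∧ ∀ y ∈ S, e.symm x ≤ e.symm y := by
  unfold MaxSet
  simp [asym_ordOf]

lemma swap_le {n : ℕ} (i0 i1 : Fin n) (h0 : i0.val = 0) (h1 : i1.val = 1) (i j : Fin n)
    (h : ¬ (i = i0 ∧ j = i1)) (h' : ¬ (i = i1 ∧ j = i0)) :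
    Equiv.swap i0 i1 i ≤ Equiv.swap i0 i1 j ↔ i ≤ j := by
  simp only [Equiv.swap_apply_def]
  split_ifs <;> simp only [Fin.le_def, Fin.ext_iff] at * <;> omega

lemma symmDiff_max {X : Type*} [DecidableEq X] {n : ℕ} (e : Fin n ≃ X)
    (i0 i1 : Fin n) (h0 : i0.val = 0) (h1 : i1.val = 1) (S : Finset X) :
    symmDiff (MaxSet S (ordOf e)) (MaxSet S (ordOf ((Equiv.swap i0 i1).trans e))) =
      if {e i0, e i1} ⊆ S then {e i0, e i1} else ∅ := by
  have hne : i0 ≠ i1 := by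
    intro h
    rw [h] at h0
    omega
  split_ifs with h
  · have ha : e i0 ∈ S := h (by simp)
    have hb : e i1 ∈ S := h (by simp)
    have A : MaxSet S (ordOf e) = {e i0} := by
      ext x
      rw [mem_maxSet_ordOf, Finset.mem_singleton]
      constructor
      · rintro ⟨_, hx⟩
        have := hx _ ha
        rw [Equiv.symm_apply_apply] at this
        rw [← Equiv.symm_apply_eq]
        simp only [Fin.le_def, Fin.ext_iff] at *
        omega
      · rintro rfl
        refine ⟨ha, fun y _ => ?_⟩
        rw [Equiv.symm_apply_apply, Fin.le_def]
        omega
    have B : MaxSet S (ordOf ((Equiv.swap i0 i1).trans e)) = {e i1} := by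
      ext x
      rw [mem_maxSet_ordOf, Finset.mem_singleton]
      simp only [Equiv.symm_trans_apply, Equiv.symm_swap]
      constructor
      · rintro ⟨_, hx⟩
        have := hx _ hb
        rw [Equiv.symm_apply_apply, Equiv.swap_apply_right] at this
        rw [← Equiv.symm_apply_eq, ← (Equiv.swap i0 i1).injective.eq_iff,
          Equiv.swap_apply_right]
        simp only [Fin.le_def, Fin.ext_iff] at *
        omega
      · rintro rfl
        refine ⟨hb, fun y _ => ?_⟩
        rw [Equiv.symm_apply_apply, Equiv.swap_apply_right, Fin.le_def]
        omega
    rw [A, B]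
    have hne' : e i0 ≠ e i1 := fun h => hne (e.injective h)
    ext x
    simp only [Finset.mem_symmDiff, Finset.mem_singleton, Finset.mem_insert]
    constructor
    · tauto
    · rintro (rfl | rfl)
      · exact Or.inl ⟨rfl, hne'⟩
      · exact Or.inr ⟨rfl, hne'.symm⟩
  · have : MaxSet S (ordOf e) = MaxSet S (ordOf ((Equiv.swap i0 i1).trans e)) := by
      ext x
      rw [mem_maxSet_ordOf, mem_maxSet_ordOf]
      refine and_congr_right fun hx => forall₂_congr fun y hy => ?_
      simp only [Equiv.symm_trans_apply, Equiv.symm_swap]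
      rw [swap_le i0 i1 h0 h1]
      · rintro ⟨h2, h3⟩
        rw [Equiv.symm_apply_eq] at h2 h3
        subst h2 h3
        exact h (by simp [Finset.insert_subset_iff, hx, hy])
      · rintro ⟨h2, h3⟩
        rw [Equiv.symm_apply_eq] at h2 h3
        subst h2 h3
        exact h (by simp [Finset.insert_subset_iff, hx, hy])
    rw [this]
    simp

lemma Dmu_swap {X : Type*} [Fintype X] [DecidableEq X] (w : X → ℝ) {n : ℕ} (e : Fin n ≃ X)
    (i0 i1 : Fin n) (h0 : i0.val = 0) (h1 : i1.val = 1) :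
    Dmu w (ordOf e) (ordOf ((Equiv.swap i0 i1).trans e)) =
      2 ^ (Fintype.card X - 2) * (w (e i0) + w (e i1)) := by
  have hne : e i0 ≠ e i1 := by
    intro h
    rw [e.injective h] at h0
    omega
  unfold Dmu
  have : ∀ S : Finset X, ∑ x ∈ symmDiff (MaxSet S (ordOf e))
      (MaxSet S (ordOf ((Equiv.swap i0 i1).trans e))), w x =
      if {e i0, e i1} ⊆ S then w (e i0) + w (e i1) else 0 := by
    intro S
    rw [symmDiff_max e i0 i1 h0 h1]
    split_ifs
    · rw [Finset.sum_pair hne]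
    · simp
  rw [Finset.sum_congr rfl fun S _ => this S, ← Finset.sum_filter, Finset.sum_const,
    nsmul_eq_mul]
  congr 1
  have h2 : (Finset.univ.filter fun S : Finset X => {e i0, e i1} ⊆ S) =
      Finset.Icc {e i0, e i1} Finset.univ := by
    ext S
    simp
  rw [h2, Finset.card_Icc_finset (Finset.subset_univ _), Finset.card_pair hne,
    Finset.card_univ]
  simp

/-- Proposition 3.5: if `|X| ≥ 3` and μ is not the "uniform" measure
(`μ{x} ≠ μ{y}` for some `x,y`), then no weighted Kendall metric `d_ω` coincides with
`D^μ` on the set of linear orders. -/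
theorem stmt_10 {X : Type*} [Fintype X] [DecidableEq X]
    (h3 : 3 ≤ Fintype.card X)
    (w : X → ℝ) (hw : ∀ x, 0 ≤ w x) (hxy : ∃ x y : X, w x ≠ w y)
    (ω : Equiv.Perm (Fin (Fintype.card X)) → ℝ) (hω : ∀ σ, 0 ≤ ω σ) :
    ∃ R R' : X → X → Prop, LinearOrderRel R ∧ LinearOrderRel R' ∧
      ∀ v v' : Fin (Fintype.card X) → X, IsRankVec R v → IsRankVec R' v' →
        sInf {c : ℝ | ∃ l : List (Equiv.Perm (Fin (Fintype.card X))),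
              (∀ σ ∈ l, AdjTrans σ) ∧ (v' = fun i => v (l.prod i)) ∧
              c = (l.map ω).sum}
          ≠ Dmu w R R' := by
  by_contra hcon
  push Not at hcon
  obtain ⟨x, y, hxy⟩ := hxy
  have hne : x ≠ y := fun h => hxy (by rw [h])
  obtain ⟨z, hzx, hzy⟩ : ∃ z, z ≠ x ∧ z ≠ y := by
    by_contra hz
    push Not at hz
    have : (Finset.univ : Finset X) ⊆ {x, y} := by
      intro z _
      by_cases h : z = x
      · simp [h]
      · simp [hz z h]
    have := Finset.card_le_card this
    rw [Finset.card_pair hne, Finset.card_univ] at this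
    omega
  let i0 : Fin (Fintype.card X) := ⟨0, by omega⟩
  let i1 : Fin (Fintype.card X) := ⟨1, by omega⟩
  have hi : i0 ≠ i1 := by simp [i0, i1]
  have key : ∀ e : Fin (Fintype.card X) ≃ X,
      sInf {c : ℝ | ∃ l : List (Equiv.Perm (Fin (Fintype.card X))),
              (∀ σ ∈ l, AdjTrans σ) ∧ (Equiv.swap i0 i1 = l.prod) ∧
              c = (l.map ω).sum} =
        2 ^ (Fintype.card X - 2) * (w (e i0) + w (e i1)) := by
    intro e
    obtain ⟨v, v', hv, hv', h⟩ := hcon (ordOf e) (ordOf ((Equiv.swap i0 i1).trans e))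
      (ordOf_linear _) (ordOf_linear _)
    rw [← Dmu_swap w e i0 i1 rfl rfl, ← h, rankVec_unique _ _ hv, rankVec_unique _ _ hv']
    congr 1
    ext c
    refine exists_congr fun l => and_congr_right fun _ => and_congr_left fun _ => ?_
    constructor
    · intro hl
      funext i
      simp [hl]
    · intro hl
      ext1 i
      have := congrFun hl i
      simpa using this
  obtain ⟨e0⟩ : Nonempty (Fin (Fintype.card X) ≃ X) := ⟨(Fintype.equivFin X).symm⟩
  let e1 := e0.trans (Equiv.swap (e0 i0) z)
  have h10 : e1 i0 = z := by simp [e1]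
  let e2 := e1.trans (Equiv.swap (e1 i1) x)
  have h20 : e2 i0 = z := by
    simp only [e2, Equiv.trans_apply, h10]
    apply Equiv.swap_apply_of_ne_of_ne
    · rw [← h10]
      exact fun h => hi (e1.injective h)
    · exact hzx
  have h21 : e2 i1 = x := by simp [e2]
  let e3 := e2.trans (Equiv.swap x y)
  have h30 : e3 i0 = z := by
    simp only [e3, Equiv.trans_apply, h20]
    exact Equiv.swap_apply_of_ne_of_ne hzx hzy
  have h31 : e3 i1 = y := by simp [e3, h21]
  have k2 := key e2
  have k3 := key e3
  rw [k2, h20, h21, h30, h31] at k3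
  have := mul_left_cancel₀ (by positivity) k3
  exact hxy (by linarith)
end

section
/- Let X be a finite set with |X| = n and μ a positive measure on 2^X. For any acyclic orders ≿ and ⊵ on X with asymmetric parts ≻ and ⊳, D^μ(≿,⊵) = Σ_{x ∈ X} [ 2^{n − |x^{↑,⊳}| − 1} + 2^{n − |x^{↑,≻}| − 1} − 2^{α_x(≿,⊵) + 1} ] · μ({x}), where x^{↑,≻} := {a ∈ X : a ≻ x}, x^{↑,⊳} := {a ∈ X : a ⊳ x}, and α_x(≿,⊵) := |{a ∈ X \ {x} : not a ≻ x and not a ⊳ x}|. -/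
open Classical Finset symmDiff

lemma count_aux {X : Type*} [Fintype X] [DecidableEq X] (x : X) (P : X → Prop) (hx : ¬ P x) :
    ∑ S : Finset X, (if x ∈ S ∧ ∀ y ∈ S, ¬ P y then (1 : ℝ) else 0)
      = 2 ^ (Finset.univ.filter fun a => a ≠ x ∧ ¬ P a).card := by
  rw [Finset.sum_boole]
  have h : (Finset.univ.filter fun S : Finset X => x ∈ S ∧ ∀ y ∈ S, ¬ P y)
      = (Finset.univ.filter fun a => a ≠ x ∧ ¬ P a).powerset.image (insert x) := by
    ext S
    simp only [Finset.mem_filter, Finset.mem_univ, true_and, Finset.mem_image,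
      Finset.mem_powerset]
    constructor
    · rintro ⟨h1, h2⟩
      refine ⟨S.erase x, ?_, Finset.insert_erase h1⟩
      intro y hy
      rw [Finset.mem_erase] at hy
      simp only [Finset.mem_filter, Finset.mem_univ, true_and]
      exact ⟨hy.1, h2 y hy.2⟩
    · rintro ⟨T, hT, rfl⟩
      refine ⟨Finset.mem_insert_self _ _, ?_⟩
      intro y hy
      rcases Finset.mem_insert.1 hy with rfl | hy
      · exact hx
      · exact (Finset.mem_filter.1 (hT hy)).2.2
  rw [h, Finset.card_image_of_injOn, Finset.card_powerset]
  · push_cast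
    rfl
  · intro S hS T hT hST
    have key : ∀ U ∈ (Finset.univ.filter fun a => a ≠ x ∧ ¬ P a).powerset, x ∉ U := by
      intro U hU hxU
      exact (Finset.mem_filter.1 (Finset.mem_powerset.1 hU hxU)).2.1 rfl
    have e := congrArg (fun U => Finset.erase U x) hST
    simpa [Finset.erase_insert (key S hS), Finset.erase_insert (key T hT)] using e

lemma ite_aux (p q : Prop) (c : ℝ) {d1 : Decidable (p ∧ ¬ q ∨ q ∧ ¬ p)} {d2 : Decidable q}
    {d3 : Decidable p} {d4 : Decidable (p ∧ q)} :
    @ite ℝ (p ∧ ¬ q ∨ q ∧ ¬ p) d1 c 0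
      = (@ite ℝ q d2 1 0 + @ite ℝ p d3 1 0 - @ite ℝ (p ∧ q) d4 1 0 * 2) * c := by
  by_cases a : p <;> by_cases b : q <;> simp [a, b] <;> norm_num

lemma card_aux {X : Type*} [Fintype X] [DecidableEq X] (x : X) (P : X → Prop) (hx : ¬ P x) :
    (Finset.univ.filter fun a => a ≠ x ∧ ¬ P a).card
      = Fintype.card X - (Finset.univ.filter fun a => P a).card - 1 := by
  have h : (Finset.univ.filter fun a => a ≠ x ∧ ¬ P a)
      = ((Finset.univ.filter fun a => P a)ᶜ).erase x := by
    ext a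
    simp
  rw [h, Finset.card_erase_of_mem (by simpa using hx), Finset.card_compl]

/-- the alternative "local" formula for `D^μ`. -/
theorem stmt_11 {X : Type*} [Fintype X] [DecidableEq X]
    (w : X → ℝ) (hw : ∀ x, 0 ≤ w x)
    (R R' : X → X → Prop) (hR : AcyclicOrd R) (hR' : AcyclicOrd R') :
    Dmu w R R' = ∑ x : X,
      ((2 : ℝ) ^ (Fintype.card X - (Finset.univ.filter fun a => asymPart R' a x).card - 1)
        + (2 : ℝ) ^ (Fintype.card X - (Finset.univ.filter fun a => asymPart R a x).card - 1)
        - (2 : ℝ) ^ ((Finset.univ.filter fun a =>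
            a ≠ x ∧ ¬ asymPart R a x ∧ ¬ asymPart R' a x).card + 1)) * w x := by
  have hirr : ∀ (Q : X → X → Prop) (x : X), ¬ asymPart Q x x := fun Q x h => h.2 h.1
  have h0 : Dmu w R R' = ∑ S : Finset X, ∑ x : X,
      (if x ∈ symmDiff (MaxSet S R) (MaxSet S R') then w x else 0) := by
    unfold Dmu
    refine Finset.sum_congr rfl fun S _ => ?_
    rw [Finset.sum_ite_mem, Finset.univ_inter]
  rw [h0, Finset.sum_comm]
  refine Finset.sum_congr rfl fun x _ => ?_
  have hA := count_aux x (fun a => asymPart R a x) (hirr R x)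
  have hB := count_aux x (fun a => asymPart R' a x) (hirr R' x)
  have hC := count_aux x (fun a => asymPart R a x ∨ asymPart R' a x)
    (fun h => h.elim (hirr R x) (hirr R' x))
  rw [card_aux x (fun a => asymPart R a x) (hirr R x)] at hA
  rw [card_aux x (fun a => asymPart R' a x) (hirr R' x)] at hB
  simp only [not_or] at hC
  rw [pow_succ, ← hA, ← hB, ← hC, Finset.sum_mul, ← Finset.sum_add_distrib,
    ← Finset.sum_sub_distrib, Finset.sum_mul]
  refine Finset.sum_congr rfl fun S _ => ?_
  have hc : (x ∈ S ∧ ∀ y ∈ S, ¬ asymPart R y x ∧ ¬ asymPart R' y x) ↔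
      ((x ∈ S ∧ ∀ y ∈ S, ¬ asymPart R y x) ∧ (x ∈ S ∧ ∀ y ∈ S, ¬ asymPart R' y x)) := by
    constructor
    · rintro ⟨h1, h2⟩
      exact ⟨⟨h1, fun y hy => (h2 y hy).1⟩, ⟨h1, fun y hy => (h2 y hy).2⟩⟩
    · rintro ⟨⟨h1, h2⟩, ⟨_, h3⟩⟩
      exact ⟨h1, fun y hy => ⟨h2 y hy, h3 y hy⟩⟩
  have hm : ∀ Q : X → X → Prop, x ∈ MaxSet S Q ↔ (x ∈ S ∧ ∀ y ∈ S, ¬ asymPart Q y x) := by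
    intro Q
    simp [MaxSet]
  simp only [Finset.mem_symmDiff, hm, hc]
  exact ite_aux _ _ _
end

section
/- Let X be a finite set with |X| = n and let ≿ and ⊵ be linear orders on X with asymmetric parts ≻ and ⊳. Then D(≿,⊵) = 2(2^n − 1) − Σ_{x ∈ X} 2^{|x^{↓,≻} ∩ x^{↓,⊳}| + 1}, where x^{↓,≻} := {a ∈ X : x ≻ a} and x^{↓,⊳} := {a ∈ X : x ⊳ a}. -/
open Classical Finset symmDiff

theorem mem_maxSet_aux {X : Type*} [DecidableEq X] (R : X → X → Prop) (S : Finset X) (x : X) :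
    x ∈ MaxSet S R ↔ x ∈ S ∧ ∀ y ∈ S, ¬ asymPart R y x := by
  unfold MaxSet
  exact Finset.mem_filter

theorem maxSet_card_aux {X : Type*} [Fintype X] [DecidableEq X] (R : X → X → Prop)
    (hR : Reflexive R ∧ Transitive R ∧ AntiSymmetric R ∧ Total R) (S : Finset X) :
    (MaxSet S R).card = if S = ∅ then 0 else 1 := by
  obtain ⟨hr, ht, ha, hT⟩ := hR
  split_ifs with h
  · subst h; simp [MaxSet]
  · rw [Finset.card_eq_one]
    have key : ∀ T : Finset X, T.Nonempty → ∃ m ∈ T, ∀ y ∈ T, R m y := by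
      intro T hT'
      induction hT' using Finset.Nonempty.cons_induction with
      | singleton a => exact ⟨a, by simp, by intro y hy; simp at hy; subst hy; exact hr _⟩
      | cons a s has hs ih =>
        obtain ⟨m, hm, hmy⟩ := ih
        rcases hT a m with h1 | h1
        · refine ⟨a, by simp, ?_⟩
          intro y hy
          rcases Finset.mem_cons.1 hy with rfl | hy
          · exact hr _
          · exact ht h1 (hmy y hy)
        · refine ⟨m, by simp [hm], ?_⟩
          intro y hy
          rcases Finset.mem_cons.1 hy with rfl | hy
          · exact h1
          · exact hmy y hy
    obtain ⟨m, hm, hmy⟩ := key S (Finset.nonempty_iff_ne_empty.2 h)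
    refine ⟨m, ?_⟩
    ext x
    rw [mem_maxSet_aux, Finset.mem_singleton]
    unfold asymPart
    constructor
    · rintro ⟨hx, hx'⟩
      by_contra hne
      exact hx' m hm ⟨hmy x hx, fun h2 => hne (ha h2 (hmy x hx))⟩
    · rintro rfl
      exact ⟨hm, fun y hy h2 => h2.2 (hmy y hy)⟩

theorem sum_maxSet_card_aux {X : Type*} [Fintype X] [DecidableEq X] (R : X → X → Prop)
    (hR : Reflexive R ∧ Transitive R ∧ AntiSymmetric R ∧ Total R) :
    ∑ S : Finset X, ((MaxSet S R).card : ℤ) = 2 ^ Fintype.card X - 1 := by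
  have h : ∀ S : Finset X, ((MaxSet S R).card : ℤ) = 1 - if S = ∅ then 1 else 0 := by
    intro S
    rw [maxSet_card_aux R hR S]
    split_ifs <;> simp
  simp only [h, Finset.sum_sub_distrib]
  simp

theorem not_asym_aux {X : Type*} (R : X → X → Prop)
    (hR : Reflexive R ∧ Transitive R ∧ AntiSymmetric R ∧ Total R) (x y : X) :
    ¬ asymPart R y x ↔ (y = x ∨ asymPart R x y) := by
  obtain ⟨hr, ht, ha, hT⟩ := hR
  unfold asymPart
  constructor
  · intro h
    by_cases hxy : y = x
    · exact Or.inl hxy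
    · right
      rcases hT x y with h1 | h1
      · exact ⟨h1, fun h2 => hxy (ha h2 h1)⟩
      · by_cases h2 : R x y
        · exact absurd (ha h1 h2) hxy
        · exact absurd ⟨h1, h2⟩ h
  · rintro (rfl | h1) h2
    · exact h2.2 h2.1
    · exact h1.2 h2.1

theorem sum_inter_aux {X : Type*} [Fintype X] [DecidableEq X] (R R' : X → X → Prop)
    (hR : Reflexive R ∧ Transitive R ∧ AntiSymmetric R ∧ Total R)
    (hR' : Reflexive R' ∧ Transitive R' ∧ AntiSymmetric R' ∧ Total R') :
    ∑ S : Finset X, (MaxSet S R ∩ MaxSet S R').card =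
      ∑ x : X, 2 ^ (Finset.univ.filter fun a => asymPart R x a ∧ asymPart R' x a).card := by
  have h1 : ∀ S : Finset X, (MaxSet S R ∩ MaxSet S R').card =
      ∑ x : X, if x ∈ MaxSet S R ∩ MaxSet S R' then 1 else 0 := by
    intro S
    rw [← Finset.card_filter]
    congr 1
    ext x
    simp
  simp only [h1]
  rw [Finset.sum_comm]
  refine Finset.sum_congr rfl fun x _ => ?_
  rw [← Finset.card_powerset, ← Finset.card_filter]
  have hmem : ∀ S : Finset X, x ∈ MaxSet S R ∩ MaxSet S R' ↔
      x ∈ S ∧ ∀ y ∈ S, y = x ∨ (asymPart R x y ∧ asymPart R' x y) := by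
    intro S
    simp only [mem_maxSet_aux, Finset.mem_inter, not_asym_aux R hR,
      not_asym_aux R' hR']
    grind
  have hx : ¬ asymPart R x x := fun h => h.2 h.1
  refine Finset.card_bij' (fun S _ => S.erase x) (fun T _ => insert x T) ?_ ?_ ?_ ?_
  · intro S hS
    rw [Finset.mem_filter, hmem] at hS
    rw [Finset.mem_powerset]
    intro y hy
    have := hS.2.2 y (Finset.mem_of_mem_erase hy)
    have := Finset.ne_of_mem_erase hy
    simp
    tauto
  · intro T hT
    rw [Finset.mem_powerset] at hT
    rw [Finset.mem_filter, hmem]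
    refine ⟨Finset.mem_univ _, Finset.mem_insert_self _ _, fun y hy => ?_⟩
    rcases Finset.mem_insert.1 hy with h | h
    · exact Or.inl h
    · right; simpa using hT h
  · intro S hS
    rw [Finset.mem_filter, hmem] at hS
    exact Finset.insert_erase hS.2.1
  · intro T hT
    rw [Finset.mem_powerset] at hT
    refine Finset.erase_insert fun h => hx ?_
    have := hT h
    simp at this
    exact this.1

theorem card_symmDiff_aux {X : Type*} [DecidableEq X] (A B : Finset X) :
    ((symmDiff A B).card : ℤ) = A.card + B.card - 2 * (A ∩ B).card := by
  have h : (symmDiff A B) = (A \ B) ∪ (B \ A) := rfl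
  rw [h, Finset.card_union_of_disjoint disjoint_sdiff_sdiff]
  have h1 := Finset.card_sdiff_add_card_inter A B
  have h2 := Finset.card_sdiff_add_card_inter B A
  rw [Finset.inter_comm B A] at h2
  push_cast
  omega

/-- the formula for the top-difference distance between two linear
orders. -/
theorem stmt_12 {X : Type*} [Fintype X] [DecidableEq X]
    (R R' : X → X → Prop)
    (hR : Reflexive R ∧ Transitive R ∧ AntiSymmetric R ∧ Total R)
    (hR' : Reflexive R' ∧ Transitive R' ∧ AntiSymmetric R' ∧ Total R') :
    (Dtop R R' : ℤ) = 2 * (2 ^ Fintype.card X - 1)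
      - ∑ x : X,
          2 ^ ((Finset.univ.filter fun a => asymPart R x a ∧ asymPart R' x a).card + 1) := by
  have h := sum_inter_aux R R' hR hR'
  have h' : (∑ S : Finset X, ((MaxSet S R ∩ MaxSet S R').card : ℤ)) =
      ∑ x : X, 2 ^ (Finset.univ.filter fun a => asymPart R x a ∧ asymPart R' x a).card := by
    exact_mod_cast h
  unfold Dtop
  push_cast
  simp only [card_symmDiff_aux, Finset.sum_sub_distrib, Finset.sum_add_distrib,
    ← Finset.mul_sum, sum_maxSet_card_aux R hR, sum_maxSet_card_aux R' hR', h', pow_succ,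
    ← Finset.sum_mul]
  ring
end

section
/- Let X be a finite set with |X| = n ≥ 2. Then the diameter of the set L(X) of linear orders on X with respect to the top-difference semimetric D equals 2(2^n − n − 1); that is, D(≿,⊵) ≤ 2(2^n − n − 1) for all linear orders ≿, ⊵ on X, and this bound is attained by some pair of linear orders. -/
open Classical Finset symmDiff

lemma mem_MaxSet_aux {X : Type*} [DecidableEq X] (S : Finset X) (R : X → X → Prop) (x : X) :
    x ∈ MaxSet S R ↔ x ∈ S ∧ ∀ y ∈ S, ¬ asymPart R y x := by
  simp [MaxSet]

lemma MaxSet_le_one_aux {X : Type*} [DecidableEq X] (S : Finset X) (R : X → X → Prop)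
    (h : LinearOrderRel R) : (MaxSet S R).card ≤ 1 := by
  rw [Finset.card_le_one]
  intro a ha b hb
  rw [mem_MaxSet_aux] at ha hb
  have h1 := ha.2 b hb.1
  have h2 := hb.2 a ha.1
  unfold asymPart at h1 h2
  have := h.2.2.2 a b
  have h4 : R a b → R b a → a = b := fun p q => h.2.2.1 p q
  tauto

lemma MaxSet_small_aux {X : Type*} [DecidableEq X] (S : Finset X) (R : X → X → Prop)
    (hS : S.card ≤ 1) : MaxSet S R = S := by
  ext x
  rw [mem_MaxSet_aux]
  refine ⟨fun h => h.1, fun h => ⟨h, fun y hy hxy => ?_⟩⟩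
  have := Finset.card_le_one.1 hS x h y hy
  subst this
  exact hxy.2 hxy.1

lemma symm_card_aux {X : Type*} [DecidableEq X] (A B : Finset X) :
    (symmDiff A B).card ≤ A.card + B.card := by
  refine le_trans (Finset.card_le_card (t := A ∪ B) ?_) (Finset.card_union_le _ _)
  intro x
  simp only [Finset.mem_symmDiff, Finset.mem_union]
  tauto

lemma count_aux_s13 {X : Type*} [Fintype X] [DecidableEq X] :
    ((∑ S : Finset X, (if S.card ≤ 1 then 0 else 2) : ℕ) : ℤ)
      = 2 * (2 ^ Fintype.card X - (Fintype.card X : ℤ) - 1) := by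
  have h1 : (Finset.univ.filter fun S : Finset X => S.card ≤ 1).card = Fintype.card X + 1 := by
    have : (Finset.univ.filter fun S : Finset X => S.card ≤ 1)
        = Finset.powersetCard 0 Finset.univ ∪ Finset.powersetCard 1 Finset.univ := by
      ext S
      simp only [Finset.mem_filter, Finset.mem_univ, true_and, Finset.mem_union,
        Finset.mem_powersetCard, Finset.subset_univ]
      omega
    rw [this, Finset.card_union_of_disjoint]
    · simp [Finset.card_powersetCard, add_comm]
    · rw [Finset.disjoint_left]
      intro S
      simp only [Finset.mem_powersetCard]
      omega
  have h2 := Finset.card_filter_add_card_filter_not (s := (Finset.univ : Finset (Finset X)))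
    (fun S : Finset X => S.card ≤ 1)
  rw [h1, Finset.card_univ, Fintype.card_finset] at h2
  rw [Finset.sum_ite]
  simp only [Finset.sum_const, smul_eq_mul, mul_zero, zero_add]
  have h2 := congrArg (Nat.cast : ℕ → ℤ) h2
  push_cast at h2
  rw [Nat.cast_mul]
  push_cast
  linarith

/-- the `D`-diameter of the set of linear orders on an `n`-element set
(`n ≥ 2`) equals `2(2^n − n − 1)`. -/
theorem stmt_13 {X : Type*} [Fintype X] [DecidableEq X] (hn : 2 ≤ Fintype.card X) :
    (∀ R R' : X → X → Prop, LinearOrderRel R → LinearOrderRel R' →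
        (Dtop R R' : ℤ) ≤ 2 * (2 ^ Fintype.card X - (Fintype.card X : ℤ) - 1)) ∧
    (∃ R R' : X → X → Prop, LinearOrderRel R ∧ LinearOrderRel R' ∧
        (Dtop R R' : ℤ) = 2 * (2 ^ Fintype.card X - (Fintype.card X : ℤ) - 1)) := by
  constructor
  · intro R R' h h'
    rw [← count_aux_s13, Nat.cast_le, Dtop]
    refine Finset.sum_le_sum fun S _ => ?_
    split_ifs with hS
    · simp [MaxSet_small_aux S _ hS]
    · have := symm_card_aux (MaxSet S R) (MaxSet S R')
      have := MaxSet_le_one_aux S R h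
      have := MaxSet_le_one_aux S R' h'
      omega
  · let e := Fintype.equivFin X
    have l1 : LinearOrderRel (fun x y : X => e x ≤ e y) :=
      ⟨fun x => le_refl _, fun x y z h1 h2 => le_trans h1 h2,
        fun x y h1 h2 => e.injective (le_antisymm h1 h2), fun x y => le_total _ _⟩
    have l2 : LinearOrderRel (fun x y : X => e y ≤ e x) :=
      ⟨fun x => le_refl _, fun x y z h1 h2 => le_trans h2 h1,
        fun x y h1 h2 => e.injective (le_antisymm h2 h1), fun x y => le_total _ _⟩
    refine ⟨_, _, l1, l2, ?_⟩
    rw [← count_aux_s13, Nat.cast_inj, Dtop]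
    refine Finset.sum_congr rfl fun S _ => ?_
    split_ifs with hS
    · simp [MaxSet_small_aux S _ hS]
    · have hne : S.Nonempty := Finset.card_pos.1 (by omega)
      obtain ⟨a, ha, ha'⟩ := Finset.exists_min_image S e hne
      obtain ⟨b, hb, hb'⟩ := Finset.exists_max_image S e hne
      have hA : MaxSet S (fun x y : X => e x ≤ e y) = {a} := by
        refine (Finset.eq_of_subset_of_card_le ?_ (by
          simpa using MaxSet_le_one_aux S _ l1)).symm
        rw [Finset.singleton_subset_iff, mem_MaxSet_aux]
        exact ⟨ha, fun y hy h => h.2 (ha' y hy)⟩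
      have hB : MaxSet S (fun x y : X => e y ≤ e x) = {b} := by
        refine (Finset.eq_of_subset_of_card_le ?_ (by
          simpa using MaxSet_le_one_aux S _ l2)).symm
        rw [Finset.singleton_subset_iff, mem_MaxSet_aux]
        exact ⟨hb, fun y hy h => h.2 (hb' y hy)⟩
      have hab : a ≠ b := by
        rintro rfl
        apply hS
        rw [Finset.card_le_one]
        intro x hx y hy
        exact e.injective (((hb' x hx).antisymm (ha' x hx)).trans
          ((hb' y hy).antisymm (ha' y hy)).symm)
      rw [hA, hB]
      have : symmDiff ({a} : Finset X) {b} = {a, b} := by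
        ext x
        simp only [Finset.mem_symmDiff, Finset.mem_singleton, Finset.mem_insert]
        constructor
        · tauto
        · rintro (rfl | rfl)
          · exact Or.inl ⟨rfl, hab⟩
          · exact Or.inr ⟨rfl, hab.symm⟩
      rw [this, Finset.card_pair hab]
end
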